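/- For every integer k ≥ 0, the subspace of (ℝ^ℕ)ᵏ consisting of linearly independent k-tuples of vectors of ℝ^ℕ is contractible. (Equivalently, the space of injective linear maps ℝᵏ → ℝ^ℕ, topologized via the images of the standard basis vectors, is contractible.) -/

import Mathlib

/-!
Let `T` be the shift on `ℝ^ℕ` that prepends `k + 1` zeros. The contraction consists of two
straight-line homotopies, each of which stays inside the linearly independent tuples.

* From `f` to `T ∘ f`: the operator `(1 - s) • 1 + s • T` is injective for all `s`
  (`shiftHom_injective`), since for `s ≠ 1` it is lower triangular with nonzero diagonal entries
  and for `s = 1` it is `T`. Injective linear maps preserve linear independence.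
* From `T ∘ f` to the tuple `(e₀, …, e_{k-1})` of unit vectors: each `T (f i)` vanishes in the
  first `k` coordinates, so for `s ≠ 0` reading off those coordinates of a linear relation among
  `(1 - s) • T (f i) + s • e i` kills all its coefficients (`linearIndependent_segment`).
-/

noncomputable section

/-- The space of linearly independent `k`-tuples of vectors of `ℝ^ℕ`, as a subspace of
the product `(ℝ^ℕ)ᵏ` (with `ℝ^ℕ` carrying the product topology). -/
def LinIndTuples (k : ℕ) : Type :=
  {f : Fin k → (ℕ → ℝ) // LinearIndependent ℝ f}

instance (k : ℕ) : TopologicalSpace (LinIndTuples k) :=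
  inferInstanceAs (TopologicalSpace {f : Fin k → (ℕ → ℝ) // LinearIndependent ℝ f})

/-- The shift of `ℝ^ℕ` that prepends `k + 1` zeros. One zero more than the `k` needed to make
room for the unit vectors keeps the shift strictly lower triangular also when `k = 0`. -/
def shift (k : ℕ) : (ℕ → ℝ) →ₗ[ℝ] (ℕ → ℝ) where
  toFun x n := if n ≤ k then 0 else x (n - (k + 1))
  map_add' x y := by
    ext n
    by_cases h : n ≤ k <;> simp [h]
  map_smul' c x := by
    ext n
    by_cases h : n ≤ k <;> simp [h]

theorem shift_apply (k : ℕ) (x : ℕ → ℝ) (n : ℕ) :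
    shift k x n = if n ≤ k then 0 else x (n - (k + 1)) := rfl

theorem continuous_shift (k : ℕ) : Continuous (shift k) := by
  refine continuous_pi fun n => ?_
  simp only [shift_apply]
  split_ifs <;> fun_prop

theorem shift_injective (k : ℕ) : Function.Injective (shift k) := by
  intro x y h
  ext n
  have := congrFun h (n + (k + 1))
  simpa [shift_apply, show ¬ n + (k + 1) ≤ k by omega] using this

/-- The operators on the segment from the identity to the shift. -/
def shiftHom (k : ℕ) (s : ℝ) : (ℕ → ℝ) →ₗ[ℝ] (ℕ → ℝ) :=
  (1 - s) • LinearMap.id + s • shift k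

theorem shiftHom_apply (k : ℕ) (s : ℝ) (x : ℕ → ℝ) :
    shiftHom k s x = (1 - s) • x + s • shift k x := rfl

theorem shiftHom_injective (k : ℕ) (s : ℝ) : Function.Injective (shiftHom k s) := by
  by_cases hs : s = 1
  · subst hs
    intro x y h
    apply shift_injective k
    simpa [shiftHom_apply] using h
  · rw [← LinearMap.ker_eq_bot, LinearMap.ker_eq_bot']
    intro x hx
    have hs' : 1 - s ≠ 0 := fun h => hs (by linarith)
    -- Forward substitution: coordinate `n` of the image involves `x n` and an earlier entry.
    ext n
    induction n using Nat.strong_induction_on with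
    | _ n ih =>
      have h := congrFun hx n
      have h0 : shift k x n = 0 := by
        rw [shift_apply]
        split_ifs with hn
        · rfl
        · exact ih _ (by omega)
      simpa [shiftHom_apply, h0, hs'] using h

/-- The first `k` unit vectors of `ℝ^ℕ`. -/
def unitTuple (k : ℕ) (i : Fin k) : ℕ → ℝ := Pi.single (i : ℕ) 1

/-- Linear independence of `f` is only needed at the endpoint `s = 0`; in particular the case
`s = 1` shows that the unit vectors themselves are independent. -/
theorem linearIndependent_segment (k : ℕ) (s : ℝ) (f : Fin k → ℕ → ℝ)
    (hf : s = 0 → LinearIndependent ℝ f) :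
    LinearIndependent ℝ fun i => (1 - s) • shift k (f i) + s • unitTuple k i := by
  by_cases hs : s = 0
  · have := (hf hs).map' (shift k) (LinearMap.ker_eq_bot.2 (shift_injective k))
    simpa [hs, Function.comp_def] using this
  · rw [Fintype.linearIndependent_iff]
    intro c hc j
    have h := congrFun hc j
    have hj : (j : ℕ) ≤ k := by omega
    simpa [shift_apply, hj, unitTuple, Pi.single_apply, Fin.val_inj, hs] using h

theorem linearIndependent_unitTuple (k : ℕ) : LinearIndependent ℝ (unitTuple k) := by
  simpa using linearIndependent_segment k 1 0 (by simp)

/-- For every `k ≥ 0`, the subspace of `(ℝ^ℕ)ᵏ` consisting of linearly independent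
`k`-tuples of vectors of `ℝ^ℕ` is contractible. -/
theorem statement13 (k : ℕ) : ContractibleSpace (LinIndTuples k) := by
  have hval : Continuous fun f : LinIndTuples k => f.1 := continuous_subtype_val
  have hT : ∀ i, Continuous fun p : unitInterval × LinIndTuples k => shift k (p.2.1 i) :=
    fun i => (continuous_shift k).comp
      ((continuous_apply i).comp (hval.comp continuous_snd))
  have hid : ∀ i, Continuous fun p : unitInterval × LinIndTuples k => p.2.1 i :=
    fun i => (continuous_apply i).comp (hval.comp continuous_snd)
  have hs : Continuous fun p : unitInterval × LinIndTuples k => (p.1 : ℝ) :=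
    continuous_subtype_val.comp continuous_fst
  let F : C(unitInterval × LinIndTuples k, LinIndTuples k) :=
    ⟨fun p => ⟨fun i => shiftHom k p.1 (p.2.1 i),
      p.2.2.map' _ (LinearMap.ker_eq_bot.2 (shiftHom_injective k p.1))⟩,
      Continuous.subtype_mk (continuous_pi fun i =>
        ((continuous_const.sub hs).smul (hid i)).add (hs.smul (hT i))) _⟩
  let G : C(unitInterval × LinIndTuples k, LinIndTuples k) :=
    ⟨fun p => ⟨fun i => (1 - (p.1 : ℝ)) • shift k (p.2.1 i) + (p.1 : ℝ) • unitTuple k i,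
      linearIndependent_segment k p.1 p.2.1 fun _ => p.2.2⟩,
      Continuous.subtype_mk (continuous_pi fun i =>
        ((continuous_const.sub hs).smul (hT i)).add (hs.smul continuous_const)) _⟩
  -- The intermediate stage `f ↦ T ∘ f`, realised as the start of the second homotopy.
  let S : C(LinIndTuples k, LinIndTuples k) := G.comp ⟨fun f => (0, f), by fun_prop⟩
  have hF : (ContinuousMap.id (LinIndTuples k)).Homotopic S :=
    ⟨{ toContinuousMap := F
       map_zero_left := fun f => Subtype.ext <| funext fun i => by
         simp [F, shiftHom_apply]
       map_one_left := fun f => Subtype.ext <| funext fun i => by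
         change shiftHom k 1 (f.1 i) = (1 - (0 : ℝ)) • shift k (f.1 i) + (0 : ℝ) • unitTuple k i
         simp [shiftHom_apply] }⟩
  have hG : S.Homotopic
      (ContinuousMap.const _ (⟨unitTuple k, linearIndependent_unitTuple k⟩ : LinIndTuples k)) :=
    ⟨{ toContinuousMap := G
       map_zero_left := fun f => rfl
       map_one_left := fun f => Subtype.ext <| funext fun i => by
         change (1 - (1 : ℝ)) • shift k (f.1 i) + (1 : ℝ) • unitTuple k i = unitTuple k i
         simp }⟩
  exact (contractible_iff_id_nullhomotopic _).2 ⟨_, hF.trans hG⟩
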